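/- Let D be a dendriform algebra and V a vector space. An extending datum Ω(D,V) = (▷₁,▷₂,◁₁,◁₂,f₁,f₂,≻_V,≺_V) with trivial actions ⇀₁ = ⇀₂ = ↼₁ = ↼₂ = 0 is a dendriform extending structure of D through V (i.e., the unified product with these operations is a dendriform algebra) if and only if (D,V,▷₁,▷₂,◁₁,◁₂,f₁,f₂,≻_V,≺_V) is a cocycle semidirect system, that is: (V,▷₁,▷₂,◁₁,◁₂) is a D-bimodule and for all a ∈ D, x,y,z ∈ V (with f := f₁+f₂, ⋆_V := ≻_V+≺_V, ▷ := ▷₁+▷₂, ◁ := ◁₁+◁₂): (C1) f(x,y)≻a = f₁(x, y◁₁a), f₂(x,y)≺a = f₂(x, y◁a), f₁(x,y)≺a = f₁(x, y◁₂a); (C2) (x⋆_Vy)◁₁a = x≻_V(y◁₁a), (x≺_Vy)◁₂a = x≺_V(y◁a), (x≻_Vy)◁₂a = x≻_V(y◁₂a); (C3) f₁(a▷x, y) = a≻f₁(x,y), f₂(a▷₂x, y) = a≺f(x,y), f₂(a▷₁x, y) = a≻f₂(x,y); (C4) (a▷x)≻_Vy = a▷₁(x≻_Vy), (a▷₂x)≺_Vy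 = a▷₂(x⋆_Vy), (a▷₁x)≺_Vy = a▷₁(x≺_Vy); (C5) f₁(x◁a, y) = f₁(x, a▷₁y), f₂(x◁₂a, y) = f₂(x, a▷y), f₂(x◁₁a, y) = f₁(x, a▷₂y); (C6) (x◁a)≻_Vy = x≻_V(a▷₁y), (x◁₂a)≺_Vy = x≺_V(a▷y), (x◁₁a)≺_Vy = x≻_V(a▷₂y); (C7) f₁(x⋆_Vy, z) = f₁(x, y≻_Vz), f₂(x≺_Vy, z) = f₂(x, y⋆_Vz), f₂(x≻_Vy, z) = f₁(x, y≺_Vz); (C8) f(x,y)▷₁z = x◁₁f₁(y,z) + x≻_V(y≻_Vz) − (x⋆_Vy)≻_Vz, f₂(x,y)▷₂z = x◁₂f(y,z) + x≺_V(y⋆_Vz) − (x≺_Vy)≺_Vz, f₁(x,y)▷₂z = x◁₁f₂(y,z) + x≻_V(y≺_Vz) − (x≻_Vy)≺_Vz. -/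

import Mathlib

/-!
Both sides of each dendriform axiom for `D ♮ V` are trilinear in `u = (a, x)`, `v = (b, y)`,
`w = (c, z)`, so the axiom holds for all triples iff it holds when each argument lies in `D` or
in `V`. With the four trivial actions zero, the eight kinds of triples and the two components of
each give the following conditions:

* `DDD`: the axiom of `D`;
* `DDV`, `VDD`, `DVD`: the left module, right module and compatibility laws of the bimodule;
* `VVD`, `DVV`, `VDV`: the `D`- and `V`-components are (C1)/(C2), (C3)/(C4), (C5)/(C6);
* `VVV`: the `D`- and `V`-components are (C7)/(C8).

Hence one direction restricts the axioms to such triples, and the other adds up the conditions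
component by component after expanding by bilinearity.
-/

/- Common framework for dendriform algebras, extending structures and unified
products, over the field `ℂ`.  All operations are encoded as plain functions
together with bilinearity predicates. -/

namespace DendriformES

section Basic

variable {M N P : Type*} [AddCommGroup M] [Module ℂ M] [AddCommGroup N] [Module ℂ N]
  [AddCommGroup P] [Module ℂ P]

/-- A map `f : M → N → P` is (ℂ-)bilinear. -/
def IsBilinear (f : M → N → P) : Prop :=
  (∀ a b y, f (a + b) y = f a y + f b y) ∧
  (∀ (c : ℂ) (a : M) (y : N), f (c • a) y = c • f a y) ∧
  (∀ a x y, f a (x + y) = f a x + f a y) ∧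
  (∀ (c : ℂ) (a : M) (x : N), f a (c • x) = c • f a x)

end Basic

section Dend

variable {D V : Type*} [AddCommGroup D] [Module ℂ D] [AddCommGroup V] [Module ℂ V]

/-- The three dendriform axioms for a pair of binary operations `s = ≻`, `p = ≺`. -/
def DendAxioms (s p : D → D → D) : Prop :=
  (∀ x y z, s (s x y + p x y) z = s x (s y z)) ∧
  (∀ x y z, p (p x y) z = p x (s y z + p y z)) ∧
  (∀ x y z, p (s x y) z = s x (p y z))

/-- `(D, s, p)` is a dendriform algebra: both operations are bilinear and the
three dendriform axioms hold. -/
def IsDendriform (s p : D → D → D) : Prop :=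
  IsBilinear s ∧ IsBilinear p ∧ DendAxioms s p

/-- `(V, t1, t2)` is a left module over the dendriform algebra `(D, s, p)`. -/
def IsLeftDModule (s p : D → D → D) (t1 t2 : D → V → V) : Prop :=
  IsBilinear t1 ∧ IsBilinear t2 ∧
  (∀ a b x, t1 (s a b + p a b) x = t1 a (t1 b x)) ∧
  (∀ a b x, t2 (p a b) x = t2 a (t1 b x + t2 b x)) ∧
  (∀ a b x, t2 (s a b) x = t1 a (t2 b x))

/-- `(V, l1, l2)` is a right module over the dendriform algebra `(D, s, p)`. -/
def IsRightDModule (s p : D → D → D) (l1 l2 : V → D → V) : Prop :=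
  IsBilinear l1 ∧ IsBilinear l2 ∧
  (∀ a b x, l1 (l1 x a + l2 x a) b = l1 x (s a b)) ∧
  (∀ a b x, l2 (l2 x a) b = l2 x (s a b + p a b)) ∧
  (∀ a b x, l2 (l1 x a) b = l1 x (p a b))

/-- `(V, t1, t2, l1, l2)` is a bimodule over the dendriform algebra `(D, s, p)`. -/
def IsDBimodule (s p : D → D → D) (t1 t2 : D → V → V) (l1 l2 : V → D → V) : Prop :=
  IsLeftDModule s p t1 t2 ∧ IsRightDModule s p l1 l2 ∧
  (∀ a b x, l1 (t1 a x + t2 a x) b = t1 a (l1 x b)) ∧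
  (∀ a b x, l2 (t2 a x) b = t2 a (l1 x b + l2 x b)) ∧
  (∀ a b x, l2 (t1 a x) b = t1 a (l2 x b))

/-- A morphism of dendriform algebras: a linear map preserving both operations. -/
def IsDendMorphism (s p : D → D → D) (s' p' : V → V → V) (φ : D → V) : Prop :=
  IsLinearMap ℂ φ ∧ (∀ x y, φ (s x y) = s' (φ x) (φ y)) ∧
    (∀ x y, φ (p x y) = p' (φ x) (φ y))

end Dend

/-- An extending datum `Ω(D,V)` of `D` through `V`: twelve maps
`tr1, tr2 = ▷₁, ▷₂ : D×V→V`, `sl1, sl2 = ◁₁, ◁₂ : V×D→V`,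
`hr1, hr2 = ⇀₁, ⇀₂ : V×D→D`, `hl1, hl2 = ↼₁, ↼₂ : D×V→D`,
`cf1, cf2 = f₁, f₂ : V×V→D`, `sv, pv = ≻_V, ≺_V : V×V→V`. -/
structure ExtendingDatum (D V : Type*) [AddCommGroup D] [Module ℂ D]
    [AddCommGroup V] [Module ℂ V] where
  tr1 : D → V → V
  tr2 : D → V → V
  sl1 : V → D → V
  sl2 : V → D → V
  hr1 : V → D → D
  hr2 : V → D → D
  hl1 : D → V → D
  hl2 : D → V → D
  cf1 : V → V → D
  cf2 : V → V → D
  sv : V → V → V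
  pv : V → V → V

section Datum

variable {D V : Type*} [AddCommGroup D] [Module ℂ D] [AddCommGroup V] [Module ℂ V]

/-- All twelve maps of an extending datum are bilinear. -/
def ExtendingDatum.Bilinear (Ω : ExtendingDatum D V) : Prop :=
  IsBilinear Ω.tr1 ∧ IsBilinear Ω.tr2 ∧ IsBilinear Ω.sl1 ∧ IsBilinear Ω.sl2 ∧
  IsBilinear Ω.hr1 ∧ IsBilinear Ω.hr2 ∧ IsBilinear Ω.hl1 ∧ IsBilinear Ω.hl2 ∧
  IsBilinear Ω.cf1 ∧ IsBilinear Ω.cf2 ∧ IsBilinear Ω.sv ∧ IsBilinear Ω.pv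

/-- The operation `⪰` of the unified product `D ♮ V`. -/
def uSucc (s : D → D → D) (Ω : ExtendingDatum D V) : D × V → D × V → D × V :=
  fun u v =>
    (s u.1 v.1 + Ω.hl1 u.1 v.2 + Ω.hr1 u.2 v.1 + Ω.cf1 u.2 v.2,
     Ω.tr1 u.1 v.2 + Ω.sl1 u.2 v.1 + Ω.sv u.2 v.2)

/-- The operation `⪯` of the unified product `D ♮ V`. -/
def uPrec (p : D → D → D) (Ω : ExtendingDatum D V) : D × V → D × V → D × V :=
  fun u v =>
    (p u.1 v.1 + Ω.hl2 u.1 v.2 + Ω.hr2 u.2 v.1 + Ω.cf2 u.2 v.2,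
     Ω.tr2 u.1 v.2 + Ω.sl2 u.2 v.1 + Ω.pv u.2 v.2)

/-- An extending datum is a dendriform extending structure when the unified
product `D ♮ V` is a dendriform algebra. -/
def IsExtendingStructure (s p : D → D → D) (Ω : ExtendingDatum D V) : Prop :=
  Ω.Bilinear ∧ IsDendriform (uSucc s Ω) (uPrec p Ω)

/-- Conditions (E1)–(E5) on a pair of linear maps `g : V → D`, `h : V → V`
relating two extending datums `Ω`, `Ω'`. -/
def ECond (s p : D → D → D) (Ω Ω' : ExtendingDatum D V) (g : V → D) (h : V → V) : Prop :=
  -- (E1)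
  (∀ a x, h (Ω.tr1 a x) = Ω'.tr1 a (h x)) ∧
  (∀ a x, h (Ω.tr2 a x) = Ω'.tr2 a (h x)) ∧
  (∀ a x, h (Ω.sl1 x a) = Ω'.sl1 (h x) a) ∧
  (∀ a x, h (Ω.sl2 x a) = Ω'.sl2 (h x) a) ∧
  -- (E2)
  (∀ a x, Ω.hr1 x a + g (Ω.sl1 x a) = s (g x) a + Ω'.hr1 (h x) a) ∧
  (∀ a x, Ω.hr2 x a + g (Ω.sl2 x a) = p (g x) a + Ω'.hr2 (h x) a) ∧
  -- (E3)
  (∀ a x, Ω.hl1 a x + g (Ω.tr1 a x) = s a (g x) + Ω'.hl1 a (h x)) ∧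
  (∀ a x, Ω.hl2 a x + g (Ω.tr2 a x) = p a (g x) + Ω'.hl2 a (h x)) ∧
  -- (E4)
  (∀ x y, Ω.cf1 x y + g (Ω.sv x y) =
      s (g x) (g y) + Ω'.hl1 (g x) (h y) + Ω'.hr1 (h x) (g y) + Ω'.cf1 (h x) (h y)) ∧
  (∀ x y, Ω.cf2 x y + g (Ω.pv x y) =
      p (g x) (g y) + Ω'.hl2 (g x) (h y) + Ω'.hr2 (h x) (g y) + Ω'.cf2 (h x) (h y)) ∧
  -- (E5)
  (∀ x y, h (Ω.sv x y) = Ω'.tr1 (g x) (h y) + Ω'.sl1 (h x) (g y) + Ω'.sv (h x) (h y)) ∧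
  (∀ x y, h (Ω.pv x y) = Ω'.tr2 (g x) (h y) + Ω'.sl2 (h x) (g y) + Ω'.pv (h x) (h y))

/-- A deformation map of an extending structure `Ω(D,V)`. -/
def IsDeformationMap (s p : D → D → D) (Ω : ExtendingDatum D V) (d : V → D) : Prop :=
  IsLinearMap ℂ d ∧
  (∀ x y, s (d x) (d y) - d (Ω.sv x y) =
      d (Ω.tr1 (d x) y + Ω.sl1 x (d y)) - Ω.hl1 (d x) y - Ω.hr1 x (d y) - Ω.cf1 x y) ∧
  (∀ x y, p (d x) (d y) - d (Ω.pv x y) =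
      d (Ω.tr2 (d x) y + Ω.sl2 x (d y)) - Ω.hl2 (d x) y - Ω.hr2 x (d y) - Ω.cf2 x y)

/-- The operation `≻_d` of the deformation `V_d` of `V`. -/
def defSucc (Ω : ExtendingDatum D V) (d : V → D) : V → V → V :=
  fun x y => Ω.sv x y + Ω.tr1 (d x) y + Ω.sl1 x (d y)

/-- The operation `≺_d` of the deformation `V_d` of `V`. -/
def defPrec (Ω : ExtendingDatum D V) (d : V → D) : V → V → V :=
  fun x y => Ω.pv x y + Ω.tr2 (d x) y + Ω.sl2 x (d y)

end Datum

section Canonical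

variable {E : Type*} [AddCommGroup E] [Module ℂ E]

theorem sub_mem_ker (D : Submodule ℂ E) (ρ : E →ₗ[ℂ] E)
    (hρD : ∀ u, ρ u ∈ D) (hfix : ∀ a ∈ D, ρ a = a) (u : E) :
    u - ρ u ∈ LinearMap.ker ρ := by
  have h := hfix (ρ u) (hρD u)
  simp [LinearMap.mem_ker, map_sub, h]

/-- The canonical extending datum of `D` through `V = ker ρ` associated to a
dendriform algebra structure `(sE, pE)` on `E` and a linear retraction
`ρ : E → D`. -/
def canonicalDatum (sE pE : E → E → E) (D : Submodule ℂ E) (ρ : E →ₗ[ℂ] E)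
    (hρD : ∀ u, ρ u ∈ D) (hfix : ∀ a ∈ D, ρ a = a) :
    ExtendingDatum ↥D ↥(LinearMap.ker ρ) where
  tr1 := fun a x => ⟨sE a.1 x.1 - ρ (sE a.1 x.1), sub_mem_ker D ρ hρD hfix _⟩
  tr2 := fun a x => ⟨pE a.1 x.1 - ρ (pE a.1 x.1), sub_mem_ker D ρ hρD hfix _⟩
  sl1 := fun x a => ⟨sE x.1 a.1 - ρ (sE x.1 a.1), sub_mem_ker D ρ hρD hfix _⟩
  sl2 := fun x a => ⟨pE x.1 a.1 - ρ (pE x.1 a.1), sub_mem_ker D ρ hρD hfix _⟩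
  hr1 := fun x a => ⟨ρ (sE x.1 a.1), hρD _⟩
  hr2 := fun x a => ⟨ρ (pE x.1 a.1), hρD _⟩
  hl1 := fun a x => ⟨ρ (sE a.1 x.1), hρD _⟩
  hl2 := fun a x => ⟨ρ (pE a.1 x.1), hρD _⟩
  cf1 := fun x y => ⟨ρ (sE x.1 y.1), hρD _⟩
  cf2 := fun x y => ⟨ρ (pE x.1 y.1), hρD _⟩
  sv := fun x y => ⟨sE x.1 y.1 - ρ (sE x.1 y.1), sub_mem_ker D ρ hρD hfix _⟩
  pv := fun x y => ⟨pE x.1 y.1 - ρ (pE x.1 y.1), sub_mem_ker D ρ hρD hfix _⟩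

/-- The pair of operations on `E` associated to an extending datum of `D`
through `V = ker ρ` (the map `Υ₂`). -/
def datumToOps (D : Submodule ℂ E) (ρ : E →ₗ[ℂ] E)
    (hρD : ∀ u, ρ u ∈ D) (hfix : ∀ a ∈ D, ρ a = a) (sD pD : ↥D → ↥D → ↥D)
    (Ω : ExtendingDatum ↥D ↥(LinearMap.ker ρ)) : (E → E → E) × (E → E → E) :=
  let dp : E → ↥D := fun u => ⟨ρ u, hρD u⟩
  let vp : E → ↥(LinearMap.ker ρ) := fun u => ⟨u - ρ u, sub_mem_ker D ρ hρD hfix u⟩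
  (fun u v =>
     (sD (dp u) (dp v) : E) + (Ω.hl1 (dp u) (vp v) : E) + (Ω.hr1 (vp u) (dp v) : E)
       + (Ω.cf1 (vp u) (vp v) : E) + (Ω.tr1 (dp u) (vp v) : E) + (Ω.sl1 (vp u) (dp v) : E)
       + (Ω.sv (vp u) (vp v) : E),
   fun u v =>
     (pD (dp u) (dp v) : E) + (Ω.hl2 (dp u) (vp v) : E) + (Ω.hr2 (vp u) (dp v) : E)
       + (Ω.cf2 (vp u) (vp v) : E) + (Ω.tr2 (dp u) (vp v) : E) + (Ω.sl2 (vp u) (dp v) : E)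
       + (Ω.pv (vp u) (vp v) : E))

end Canonical

end DendriformES

namespace DendriformES

section Helpers

variable {M N P : Type*} [AddCommGroup M] [Module ℂ M] [AddCommGroup N] [Module ℂ N]
  [AddCommGroup P] [Module ℂ P] {f : M → N → P}

theorem IsBilinear.zero_left (h : IsBilinear f) (y : N) : f 0 y = 0 := by
  simpa using h.2.1 0 0 y

theorem IsBilinear.zero_right (h : IsBilinear f) (x : M) : f x 0 = 0 := by
  simpa using h.2.2.2 0 x 0

variable {D V : Type*} [AddCommGroup D] [Module ℂ D] [AddCommGroup V] [Module ℂ V]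

/-- The componentwise shape shared by `⪰` and `⪯` when the trivial actions vanish: it is bilinear
as soon as its five constituents are. -/
theorem isBilinear_prod {s : D → D → D} {g : V → V → D} {t : D → V → V} {l : V → D → V}
    {q : V → V → V} (hs : IsBilinear s) (hg : IsBilinear g) (ht : IsBilinear t)
    (hl : IsBilinear l) (hq : IsBilinear q) :
    IsBilinear (fun u v : D × V =>
      ((s u.1 v.1 + g u.2 v.2, t u.1 v.2 + l u.2 v.1 + q u.2 v.2) : D × V)) := by
  obtain ⟨s1, s2, s3, s4⟩ := hs
  obtain ⟨g1, g2, g3, g4⟩ := hg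
  obtain ⟨t1, t2, t3, t4⟩ := ht
  obtain ⟨l1, l2, l3, l4⟩ := hl
  obtain ⟨q1, q2, q3, q4⟩ := hq
  refine ⟨fun a b y => ?_, fun c a y => ?_, fun a x y => ?_, fun c a x => ?_⟩ <;> ext <;>
    simp only [Prod.fst_add, Prod.snd_add, Prod.smul_fst, Prod.smul_snd, s1, s2, s3, s4, g1, g2,
      g3, g4, t1, t2, t3, t4, l1, l2, l3, l4, q1, q2, q3, q4] <;> module

end Helpers

/-- an extending datum with trivial actions
`⇀₁ = ⇀₂ = ↼₁ = ↼₂ = 0` is a dendriform extending structure iff the data form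
a cocycle semidirect system, i.e. `(V,▷₁,▷₂,◁₁,◁₂)` is a `D`-bimodule and
(C1)–(C8) hold. -/
theorem cocycleSemidirectSystem_iff {D V : Type*}
    [AddCommGroup D] [Module ℂ D] [AddCommGroup V] [Module ℂ V]
    (s p : D → D → D) (hD : IsDendriform s p)
    (Ω : ExtendingDatum D V) (hbil : Ω.Bilinear)
    (hhr1 : ∀ x a, Ω.hr1 x a = 0) (hhr2 : ∀ x a, Ω.hr2 x a = 0)
    (hhl1 : ∀ a x, Ω.hl1 a x = 0) (hhl2 : ∀ a x, Ω.hl2 a x = 0) :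
    IsExtendingStructure s p Ω ↔
      (IsDBimodule s p Ω.tr1 Ω.tr2 Ω.sl1 Ω.sl2 ∧
      -- (C1)
      (∀ a x y, s (Ω.cf1 x y + Ω.cf2 x y) a = Ω.cf1 x (Ω.sl1 y a)) ∧
      (∀ a x y, p (Ω.cf2 x y) a = Ω.cf2 x (Ω.sl1 y a + Ω.sl2 y a)) ∧
      (∀ a x y, p (Ω.cf1 x y) a = Ω.cf1 x (Ω.sl2 y a)) ∧
      -- (C2)
      (∀ a x y, Ω.sl1 (Ω.sv x y + Ω.pv x y) a = Ω.sv x (Ω.sl1 y a)) ∧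
      (∀ a x y, Ω.sl2 (Ω.pv x y) a = Ω.pv x (Ω.sl1 y a + Ω.sl2 y a)) ∧
      (∀ a x y, Ω.sl2 (Ω.sv x y) a = Ω.sv x (Ω.sl2 y a)) ∧
      -- (C3)
      (∀ a x y, Ω.cf1 (Ω.tr1 a x + Ω.tr2 a x) y = s a (Ω.cf1 x y)) ∧
      (∀ a x y, Ω.cf2 (Ω.tr2 a x) y = p a (Ω.cf1 x y + Ω.cf2 x y)) ∧
      (∀ a x y, Ω.cf2 (Ω.tr1 a x) y = s a (Ω.cf2 x y)) ∧
      -- (C4)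
      (∀ a x y, Ω.sv (Ω.tr1 a x + Ω.tr2 a x) y = Ω.tr1 a (Ω.sv x y)) ∧
      (∀ a x y, Ω.pv (Ω.tr2 a x) y = Ω.tr2 a (Ω.sv x y + Ω.pv x y)) ∧
      (∀ a x y, Ω.pv (Ω.tr1 a x) y = Ω.tr1 a (Ω.pv x y)) ∧
      -- (C5)
      (∀ a x y, Ω.cf1 (Ω.sl1 x a + Ω.sl2 x a) y = Ω.cf1 x (Ω.tr1 a y)) ∧
      (∀ a x y, Ω.cf2 (Ω.sl2 x a) y = Ω.cf2 x (Ω.tr1 a y + Ω.tr2 a y)) ∧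
      (∀ a x y, Ω.cf2 (Ω.sl1 x a) y = Ω.cf1 x (Ω.tr2 a y)) ∧
      -- (C6)
      (∀ a x y, Ω.sv (Ω.sl1 x a + Ω.sl2 x a) y = Ω.sv x (Ω.tr1 a y)) ∧
      (∀ a x y, Ω.pv (Ω.sl2 x a) y = Ω.pv x (Ω.tr1 a y + Ω.tr2 a y)) ∧
      (∀ a x y, Ω.pv (Ω.sl1 x a) y = Ω.sv x (Ω.tr2 a y)) ∧
      -- (C7)
      (∀ x y z, Ω.cf1 (Ω.sv x y + Ω.pv x y) z = Ω.cf1 x (Ω.sv y z)) ∧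
      (∀ x y z, Ω.cf2 (Ω.pv x y) z = Ω.cf2 x (Ω.sv y z + Ω.pv y z)) ∧
      (∀ x y z, Ω.cf2 (Ω.sv x y) z = Ω.cf1 x (Ω.pv y z)) ∧
      -- (C8)
      (∀ x y z, Ω.tr1 (Ω.cf1 x y + Ω.cf2 x y) z =
        Ω.sl1 x (Ω.cf1 y z) + Ω.sv x (Ω.sv y z) - Ω.sv (Ω.sv x y + Ω.pv x y) z) ∧
      (∀ x y z, Ω.tr2 (Ω.cf2 x y) z =
        Ω.sl2 x (Ω.cf1 y z + Ω.cf2 y z) + Ω.pv x (Ω.sv y z + Ω.pv y z)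
          - Ω.pv (Ω.pv x y) z) ∧
      (∀ x y z, Ω.tr2 (Ω.cf1 x y) z =
        Ω.sl1 x (Ω.cf2 y z) + Ω.sv x (Ω.pv y z) - Ω.pv (Ω.sv x y) z)) := by
  obtain ⟨b_s, b_p, d_a, d_b, d_c⟩ := hD
  have hbil' := hbil
  obtain ⟨b_tr1, b_tr2, b_sl1, b_sl2, -, -, -, -, b_cf1, b_cf2, b_sv, b_pv⟩ := hbil'
  have hS : uSucc s Ω = fun u v => (s u.1 v.1 + Ω.cf1 u.2 v.2,
      Ω.tr1 u.1 v.2 + Ω.sl1 u.2 v.1 + Ω.sv u.2 v.2) := by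
    funext u v
    simp only [uSucc, hhl1, hhr1, add_zero]
  have hP : uPrec p Ω = fun u v => (p u.1 v.1 + Ω.cf2 u.2 v.2,
      Ω.tr2 u.1 v.2 + Ω.sl2 u.2 v.1 + Ω.pv u.2 v.2) := by
    funext u v
    simp only [uPrec, hhl2, hhr2, add_zero]
  rw [IsExtendingStructure, hS, hP]
  constructor
  · rintro ⟨-, -, -, h1, h2, h3⟩
    simp only [Prod.mk_add_mk, Prod.mk.injEq] at h1 h2 h3
    -- The letters record which arguments lie in `D` and which in `V`; the digit is the axiom.
    have ddv1 := fun (a b : D) (x : V) => h1 (a, 0) (b, 0) (0, x)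
    have ddv2 := fun (a b : D) (x : V) => h2 (a, 0) (b, 0) (0, x)
    have ddv3 := fun (a b : D) (x : V) => h3 (a, 0) (b, 0) (0, x)
    have vdd1 := fun (a b : D) (x : V) => h1 (0, x) (a, 0) (b, 0)
    have vdd2 := fun (a b : D) (x : V) => h2 (0, x) (a, 0) (b, 0)
    have vdd3 := fun (a b : D) (x : V) => h3 (0, x) (a, 0) (b, 0)
    have dvd1 := fun (a b : D) (x : V) => h1 (a, 0) (0, x) (b, 0)
    have dvd2 := fun (a b : D) (x : V) => h2 (a, 0) (0, x) (b, 0)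
    have dvd3 := fun (a b : D) (x : V) => h3 (a, 0) (0, x) (b, 0)
    have vvd1 := fun (a : D) (x y : V) => h1 (0, x) (0, y) (a, 0)
    have vvd2 := fun (a : D) (x y : V) => h2 (0, x) (0, y) (a, 0)
    have vvd3 := fun (a : D) (x y : V) => h3 (0, x) (0, y) (a, 0)
    have dvv1 := fun (a : D) (x y : V) => h1 (a, 0) (0, x) (0, y)
    have dvv2 := fun (a : D) (x y : V) => h2 (a, 0) (0, x) (0, y)
    have dvv3 := fun (a : D) (x y : V) => h3 (a, 0) (0, x) (0, y)
    have vdv1 := fun (a : D) (x y : V) => h1 (0, x) (a, 0) (0, y)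
    have vdv2 := fun (a : D) (x y : V) => h2 (0, x) (a, 0) (0, y)
    have vdv3 := fun (a : D) (x y : V) => h3 (0, x) (a, 0) (0, y)
    have vvv1 := fun (x y z : V) => h1 (0, x) (0, y) (0, z)
    have vvv2 := fun (x y z : V) => h2 (0, x) (0, y) (0, z)
    have vvv3 := fun (x y z : V) => h3 (0, x) (0, y) (0, z)
    simp only [
      b_s.zero_left, b_s.zero_right, b_p.zero_left, b_p.zero_right, b_tr1.zero_left,
      b_tr1.zero_right, b_tr2.zero_left, b_tr2.zero_right, b_sl1.zero_left, b_sl1.zero_right,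
      b_sl2.zero_left, b_sl2.zero_right, b_cf1.zero_left, b_cf1.zero_right, b_cf2.zero_left,
      b_cf2.zero_right, b_sv.zero_left, b_sv.zero_right, b_pv.zero_left, b_pv.zero_right,
      add_zero, zero_add]
      at
        ddv1 ddv2 ddv3 vdd1 vdd2 vdd3 dvd1 dvd2 dvd3 vvd1 vvd2 vvd3 dvv1 dvv2 dvv3
        vdv1 vdv2 vdv3 vvv1 vvv2 vvv3
    refine ⟨⟨⟨b_tr1, b_tr2, fun a b x => (ddv1 a b x).2, fun a b x => (ddv2 a b x).2,
        fun a b x => (ddv3 a b x).2⟩,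
      ⟨b_sl1, b_sl2, fun a b x => (vdd1 a b x).2, fun a b x => (vdd2 a b x).2,
        fun a b x => (vdd3 a b x).2⟩,
      fun a b x => (dvd1 a b x).2, fun a b x => (dvd2 a b x).2, fun a b x => (dvd3 a b x).2⟩,
      fun a x y => (vvd1 a x y).1, fun a x y => (vvd2 a x y).1, fun a x y => (vvd3 a x y).1,
      fun a x y => (vvd1 a x y).2, fun a x y => (vvd2 a x y).2, fun a x y => (vvd3 a x y).2,
      fun a x y => (dvv1 a x y).1, fun a x y => (dvv2 a x y).1, fun a x y => (dvv3 a x y).1,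
      fun a x y => (dvv1 a x y).2, fun a x y => (dvv2 a x y).2, fun a x y => (dvv3 a x y).2,
      fun a x y => (vdv1 a x y).1, fun a x y => (vdv2 a x y).1, fun a x y => (vdv3 a x y).1,
      fun a x y => (vdv1 a x y).2, fun a x y => (vdv2 a x y).2, fun a x y => (vdv3 a x y).2,
      fun x y z => (vvv1 x y z).1, fun x y z => (vvv2 x y z).1, fun x y z => (vvv3 x y z).1,
      fun x y z => eq_sub_of_add_eq (vvv1 x y z).2, fun x y z => eq_sub_of_add_eq (vvv2 x y z).2,
      fun x y z => eq_sub_of_add_eq (vvv3 x y z).2⟩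
  · rintro ⟨⟨⟨-, -, l_a, l_b, l_c⟩, ⟨-, -, r_a, r_b, r_c⟩, m_a, m_b, m_c⟩,
      c1a, c1b, c1c, c2a, c2b, c2c, c3a, c3b, c3c, c4a, c4b, c4c, c5a, c5b, c5c, c6a, c6b, c6c,
      c7a, c7b, c7c, c8a, c8b, c8c⟩
    refine ⟨hbil, isBilinear_prod b_s b_cf1 b_tr1 b_sl1 b_sv,
      isBilinear_prod b_p b_cf2 b_tr2 b_sl2 b_pv, ?_⟩
    simp only [
      b_s.1, b_p.2.2.1, b_tr1.1, b_tr2.2.2.1, b_sl1.1, b_sl2.2.2.1, b_cf1.1, b_cf2.2.2.1, b_sv.1,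
      b_pv.2.2.1]
      at
        d_a d_b d_c l_a l_b l_c r_a r_b r_c m_a m_b m_c c1a c1b c1c c2a c2b c2c
        c3a c3b c3c c4a c4b c4c c5a c5b c5c c6a c6b c6c c7a c7b c7c c8a c8b c8c
    -- In each component, the contributions of the eight kinds of triples are summed.
    refine ⟨?_, ?_, ?_⟩ <;> rintro ⟨a, x⟩ ⟨b, y⟩ ⟨c, z⟩ <;>
      simp only [Prod.mk_add_mk, Prod.mk.injEq,
      b_s.1, b_s.2.2.1, b_p.1, b_p.2.2.1, b_tr1.1, b_tr1.2.2.1, b_tr2.1, b_tr2.2.2.1, b_sl1.1,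
      b_sl1.2.2.1, b_sl2.1, b_sl2.2.2.1, b_cf1.1, b_cf1.2.2.1, b_cf2.1, b_cf2.2.2.1, b_sv.1,
      b_sv.2.2.1, b_pv.1, b_pv.2.2.1] <;>
      constructor
    · linear_combination (norm := module) d_a a b c + c1a c x y + c3a a y z + c5a b x z + c7a x y z
    · linear_combination (norm := module) l_a a b z + r_a b c x + m_a a c y + c2a c x y +
        c4a a y z + c6a b x z + c8a x y z
    · linear_combination (norm := module) d_b a b c + c1b c x y + c3b a y z + c5b b x z + c7b x y z
    · linear_combination (norm := module) l_b a b z + r_b b c x + m_b a c y + c2b c x y +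
        c4b a y z + c6b b x z + c8b x y z
    · linear_combination (norm := module) d_c a b c + c1c c x y + c3c a y z + c5c b x z + c7c x y z
    · linear_combination (norm := module) l_c a b z + r_c b c x + m_c a c y + c2c c x y +
        c4c a y z + c6c b x z + c8c x y z

end DendriformES
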